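/- For every integer n ≥ 36, f(n)² − f(n−6)·f(n+6) > 0. -/

import Mathlib

/-- `f n` is the number of relatively prime subsets of `{1, 2, ..., n}`,
i.e. subsets `A` with `gcd A = 1` (such subsets are automatically nonempty). -/
def f (n : ℕ) : ℕ :=
  ((Finset.Icc 1 n).powerset.filter (fun A => A.gcd id = 1)).card

/-!
Let `g n = 2 ^ n - f n` count the subsets of `{1, ..., n}` that are not relatively prime. A prime
dividing all elements of a nonempty such set is `2` or one of at most `n / 2` odd numbers `d ≥ 3`,
which gives
`2 ^ (n / 2) ≤ g n ≤ 2 ^ (n / 2) + (n / 2) * 2 ^ (n / 3) ≤ 2 ^ (n / 2 + 2)`.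
Hence `2 * g (m + k) ≤ 2 ^ k * g m` as soon as `k ≥ 6`, and the claim follows from
`f (m + k) ^ 2 - f m * f (m + 2 * k)
  = f m * g (m + 2 * k) + 2 ^ (m + k) * (2 ^ k * g m - 2 * g (m + k)) + g (m + k) ^ 2`.
-/

open Finset

/-- The subsets of `{1, ..., n}` that are not relatively prime, complementary to those counted by
`f n`. The empty set is one of them, since its `Finset.gcd` is `0`. -/
def nonRelPrimeSubsets (n : ℕ) : Finset (Finset ℕ) :=
  {A ∈ (Icc 1 n).powerset | A.gcd id ≠ 1}

/-- The subsets of `{1, ..., n}` consisting of multiples of `d`, used to cover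
`nonRelPrimeSubsets n`. -/
def subsetsOfMultiples (n d : ℕ) : Finset (Finset ℕ) :=
  {x ∈ Icc 1 n | d ∣ x}.powerset

lemma mem_nonRelPrimeSubsets {n : ℕ} {A : Finset ℕ} :
    A ∈ nonRelPrimeSubsets n ↔ A ⊆ Icc 1 n ∧ A.gcd id ≠ 1 := by
  rw [nonRelPrimeSubsets, mem_filter, mem_powerset]

lemma mem_subsetsOfMultiples {n d : ℕ} {A : Finset ℕ} :
    A ∈ subsetsOfMultiples n d ↔ A ⊆ Icc 1 n ∧ d ∣ A.gcd id := by
  simp only [subsetsOfMultiples, mem_powerset, subset_iff, mem_filter, Finset.dvd_gcd_iff, id,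
    forall_and]

lemma card_subsetsOfMultiples (n d : ℕ) : #(subsetsOfMultiples n d) = 2 ^ (n / d) := by
  rw [subsetsOfMultiples, card_powerset, ← Nat.Ioc_filter_dvd_card_eq_div]
  rfl -- `Icc 1 n` unfolds to `Ioc 0 n`

lemma f_add_card_nonRelPrimeSubsets (n : ℕ) : f n + #(nonRelPrimeSubsets n) = 2 ^ n := by
  rw [f, nonRelPrimeSubsets, card_filter_add_card_filter_not, card_powerset, Nat.card_Icc,
    Nat.add_sub_cancel]

lemma subsetsOfMultiples_subset_nonRelPrimeSubsets (n : ℕ) {d : ℕ} (hd : d ≠ 1) :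
    subsetsOfMultiples n d ⊆ nonRelPrimeSubsets n := by
  intro A hA
  obtain ⟨hAn, hdvd⟩ := mem_subsetsOfMultiples.1 hA
  exact mem_nonRelPrimeSubsets.2 ⟨hAn, fun hgcd => hd (Nat.dvd_one.1 (hgcd ▸ hdvd))⟩

lemma nonRelPrimeSubsets_subset_union (n : ℕ) :
    nonRelPrimeSubsets n ⊆
      subsetsOfMultiples n 2 ∪
        (Icc 1 (n / 2)).biUnion fun i => subsetsOfMultiples n (2 * i + 1) := by
  intro A hA
  obtain ⟨hAn, hgcd⟩ := mem_nonRelPrimeSubsets.1 hA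
  rw [mem_union, mem_biUnion]
  obtain rfl | ⟨a, ha⟩ := A.eq_empty_or_nonempty
  · exact .inl (mem_subsetsOfMultiples.2 ⟨hAn, by simp⟩)
  obtain ⟨p, hp, hpA⟩ := Nat.exists_prime_and_dvd hgcd
  have hpmem : A ∈ subsetsOfMultiples n p := mem_subsetsOfMultiples.2 ⟨hAn, hpA⟩
  obtain rfl | ⟨i, rfl⟩ := hp.eq_two_or_odd'
  · exact .inl hpmem
  · obtain ⟨ha_pos, ha_le⟩ := mem_Icc.1 (hAn ha)
    have hp_le : 2 * i + 1 ≤ a := Nat.le_of_dvd ha_pos (Finset.dvd_gcd_iff.1 hpA a ha)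
    have hp_two_le := hp.two_le
    exact .inr ⟨i, mem_Icc.2 ⟨by lia, by lia⟩, hpmem⟩

lemma two_pow_half_le_card_nonRelPrimeSubsets (n : ℕ) :
    2 ^ (n / 2) ≤ #(nonRelPrimeSubsets n) := by
  rw [← card_subsetsOfMultiples]
  exact card_le_card (subsetsOfMultiples_subset_nonRelPrimeSubsets n (by decide))

lemma card_nonRelPrimeSubsets_le (n : ℕ) :
    #(nonRelPrimeSubsets n) ≤ 2 ^ (n / 2) + n / 2 * 2 ^ (n / 3) := by
  have hodd : #((Icc 1 (n / 2)).biUnion fun i => subsetsOfMultiples n (2 * i + 1)) ≤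
      #(Icc 1 (n / 2)) * 2 ^ (n / 3) := by
    refine card_biUnion_le_card_mul _ _ _ fun i hi => ?_
    have hthree : 3 ≤ 2 * i + 1 := by have := (mem_Icc.1 hi).1; lia
    rw [card_subsetsOfMultiples]
    gcongr
    exact one_le_two
  rw [Nat.card_Icc, Nat.add_sub_cancel] at hodd
  exact (card_le_card (nonRelPrimeSubsets_subset_union n)).trans <|
    (card_union_le _ _).trans <| Nat.add_le_add (card_subsetsOfMultiples n 2).le hodd

lemma half_mul_two_pow_third_le (n : ℕ) : n / 2 * 2 ^ (n / 3) ≤ 3 * 2 ^ (n / 2) := by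
  induction n using Nat.strong_induction_on with
  | _ n ih =>
    obtain hn | hn := lt_or_ge n 12
    · interval_cases n <;> norm_num
    · obtain ⟨m, rfl⟩ := Nat.exists_eq_add_of_le' (show 6 ≤ n by lia)
      have hthird : (m + 6) / 3 = m / 3 + 2 := by lia
      have hhalf : (m + 6) / 2 = m / 2 + 3 := by lia
      calc (m + 6) / 2 * 2 ^ ((m + 6) / 3)
          ≤ (2 * (m / 2)) * 2 ^ (m / 3 + 2) := by rw [hthird]; gcongr; lia
        _ = 8 * (m / 2 * 2 ^ (m / 3)) := by ring
        _ ≤ 8 * (3 * 2 ^ (m / 2)) := Nat.mul_le_mul_left 8 (ih m (by lia))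
        _ = 3 * 2 ^ ((m + 6) / 2) := by rw [hhalf]; ring

lemma card_nonRelPrimeSubsets_le_two_pow (n : ℕ) :
    #(nonRelPrimeSubsets n) ≤ 2 ^ (n / 2 + 2) :=
  calc #(nonRelPrimeSubsets n)
      ≤ 2 ^ (n / 2) + n / 2 * 2 ^ (n / 3) := card_nonRelPrimeSubsets_le n
    _ ≤ 2 ^ (n / 2) + 3 * 2 ^ (n / 2) := Nat.add_le_add_left (half_mul_two_pow_third_le n) _
    _ = 2 ^ (n / 2 + 2) := by ring

lemma two_mul_card_nonRelPrimeSubsets_add_le (m : ℕ) {k : ℕ} (hk : 6 ≤ k) :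
    2 * #(nonRelPrimeSubsets (m + k)) ≤ 2 ^ k * #(nonRelPrimeSubsets m) :=
  calc 2 * #(nonRelPrimeSubsets (m + k))
      ≤ 2 * 2 ^ ((m + k) / 2 + 2) := by gcongr; exact card_nonRelPrimeSubsets_le_two_pow _
    _ = 2 ^ ((m + k) / 2 + 3) := by ring
    _ ≤ 2 ^ (k + m / 2) := Nat.pow_le_pow_right two_pos (by lia)
    _ = 2 ^ k * 2 ^ (m / 2) := pow_add ..
    _ ≤ 2 ^ k * #(nonRelPrimeSubsets m) := by
      gcongr; exact two_pow_half_le_card_nonRelPrimeSubsets m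

lemma f_sq_sub_f_mul_f (m k : ℕ) :
    (f (m + k) : ℤ) ^ 2 - f m * f (m + 2 * k) =
      f m * #(nonRelPrimeSubsets (m + 2 * k)) +
      2 ^ (m + k) * (2 ^ k * #(nonRelPrimeSubsets m) - 2 * #(nonRelPrimeSubsets (m + k))) +
      #(nonRelPrimeSubsets (m + k)) ^ 2 := by
  have hf (n : ℕ) : (f n : ℤ) = 2 ^ n - #(nonRelPrimeSubsets n) :=
    eq_sub_of_add_eq (mod_cast f_add_card_nonRelPrimeSubsets n)
  simp only [hf]
  ring

theorem stmt_8_general (n k : ℕ) (hk : 6 ≤ k) (hkn : k ≤ n) :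
    (f n : ℤ) ^ 2 - f (n - k) * f (n + k) > 0 := by
  obtain ⟨m, rfl⟩ := Nat.exists_eq_add_of_le' hkn
  rw [Nat.add_sub_cancel, add_assoc, ← two_mul, f_sq_sub_f_mul_f]
  have hgrowth : (0 : ℤ) ≤
      2 ^ k * #(nonRelPrimeSubsets m) - 2 * #(nonRelPrimeSubsets (m + k)) :=
    sub_nonneg.2 (mod_cast two_mul_card_nonRelPrimeSubsets_add_le m hk)
  have hpos : 0 < #(nonRelPrimeSubsets (m + k)) :=
    (Nat.two_pow_pos _).trans_le (two_pow_half_le_card_nonRelPrimeSubsets _)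
  positivity

theorem stmt_8 (n : ℕ) (hn : 36 ≤ n) :
    (f n : ℤ) ^ 2 - f (n - 6) * f (n + 6) > 0 :=
  stmt_8_general n 6 le_rfl (by lia)
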